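/- With F = x_0^{d_0} ⋯ x_n^{d_n}, 0 < d_0 ≤ ⋯ ≤ d_n, d = Σ d_i, a Waring decomposition F = ℓ_1^d + ⋯ + ℓ_r^d (r = R(F)), I the homogeneous vanishing ideal of {[ℓ_1],…,[ℓ_r]} in S = ℂ[α_0,…,α_n], J = (α_1^{d_1+1},…,α_n^{d_n+1}), and q_t = dim_ℂ(I_t ∩ α_0·S_{t−1}): if for some integer t one has q_t < dim_ℂ J_{t−1}, then q_{t+k·d_0} < dim_ℂ J_{t+k·d_0−1} for every integer k > 0. -/

import Mathlib

/-!
Let `P` be the set of indices `j` with `ℓ_j` off the hyperplane `α_0 = 0`, and normalize these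
points to `y_j = ℓ_j / ℓ_{j,0}`. A form `g` satisfies `α_0 g ∈ I` exactly
when it vanishes at all `y_j`, so `q_t` is the dimension of the space `W` of forms of degree `t - 1`
vanishing on `P`. In fact `q_t ≥ dim J_{t-1}` for every `t` (`finrank_le_qdim`), so the hypothesis
of the theorem never holds and the claim follows vacuously.

To prove the inequality, let `B` be the set of exponents `b` with `b_0 = 0` and `b_i ≤ d_i`; it has
`r ≥ |P|` elements. Since `I` is contained in the apolar ideal of the monomial (`apolar`), and
`0 < d_0`, a form vanishing on `P` contains no monomial `α^b` with `b ∈ B`. Looking at top-degree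
parts (`top_coeff_zero`), the functions `α^b` on `P` are linearly independent, hence a
basis of `ℂ^P`, and a form of degree `s` only involves those with `|b| ≤ s` (`exists_reduced`). Thus
`S_s = W + N`, where `N` is spanned by the monomials outside the monomial ideal `J`. As
`J_s ∩ N = 0`, this gives `dim W ≥ dim J_s`.
-/

open MvPolynomial

/-- The space `S_k` of homogeneous polynomials of degree `k` in `ℂ[α_0,…,α_n]`,
indexed by an integer `k` (with `S_k = 0` for `k < 0`). -/
noncomputable def homZ (n : ℕ) (k : ℤ) : Submodule ℂ (MvPolynomial (Fin (n + 1)) ℂ) :=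
  if 0 ≤ k then homogeneousSubmodule (Fin (n + 1)) ℂ k.toNat else ⊥

/-- The degree-`k` homogeneous component of an ideal, for an integer `k`. -/
noncomputable def idealZ {n : ℕ} (I : Ideal (MvPolynomial (Fin (n + 1)) ℂ)) (k : ℤ) :
    Submodule ℂ (MvPolynomial (Fin (n + 1)) ℂ) :=
  Submodule.restrictScalars ℂ I ⊓ homZ n k

/-- `q_t = dim(I_t ∩ α_0·S_{t−1})`, where `I` is the vanishing ideal of the points
of a Waring decomposition. -/
noncomputable def qdim {n : ℕ} (I : Ideal (MvPolynomial (Fin (n + 1)) ℂ)) (t : ℤ) : ℕ :=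
  Module.finrank ℂ
    ↥(idealZ I t ⊓ (homZ n (t - 1)).map (LinearMap.mulLeft ℂ (X 0)))

/-- The moments `∑ⱼ ℓⱼ^μ` of a power sum decomposition of the monomial `x^e`: comparing the
coefficients of `x^μ`, where `|μ| = |e|`, shows that the only nonzero one is `μ = e`. -/
theorem moment {n r : ℕ} (e : Fin (n + 1) →₀ ℕ) (ℓ : Fin r → Fin (n + 1) → ℂ)
    (hdec : (monomial e 1 : MvPolynomial (Fin (n + 1)) ℂ)
      = ∑ j, (∑ i, C (ℓ j i) * X i) ^ e.degree)
    (μ : Fin (n + 1) →₀ ℕ) (hμ : μ.degree = e.degree) :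
    ∑ j, eval (ℓ j) (monomial μ 1) = 0 ↔ μ ≠ e := by
  have h := congrArg (coeff μ) hdec
  have hμ' : (μ.sum fun _ m ↦ m) = e.degree := hμ
  simp only [← smul_eq_C_mul, coeff_sum, coeff_linearCombination_X_pow_of_fintype, if_pos hμ',
    coeff_monomial, ← Finset.mul_sum] at h
  have hm : (μ.multinomial : ℂ) ≠ 0 := by
    rw [Finsupp.multinomial_eq]
    exact_mod_cast (Nat.multinomial_pos _ _).ne'
  simp only [eval_monomial, one_mul]
  by_cases he : μ = e
  · subst he
    rw [if_pos rfl] at h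
    simp only [ne_eq, not_true, iff_false]
    intro h0
    rw [h0] at h
    simp at h
  · rw [if_neg (Ne.symm he)] at h
    simp only [ne_eq, he, not_false_eq_true, iff_true]
    exact (mul_eq_zero.1 h.symm).resolve_left hm

/-- Forms vanishing at the points `ℓⱼ` lie in the apolar ideal of `x^e`, expressed in coordinates:
they contain no monomial dividing `x^e`. For `e = a + c`, the coefficient of `x^a` is read off
from `∑ⱼ ℓⱼ^c g(ℓⱼ) = 0` because all moments except the one at `e` vanish. -/
theorem apolar {n r : ℕ} (e : Fin (n + 1) →₀ ℕ) (ℓ : Fin r → Fin (n + 1) → ℂ)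
    (hdec : (monomial e 1 : MvPolynomial (Fin (n + 1)) ℂ)
      = ∑ j, (∑ i, C (ℓ j i) * X i) ^ e.degree)
    {m : ℕ} {g : MvPolynomial (Fin (n + 1)) ℂ} (hg : g.IsHomogeneous m)
    (hv : ∀ j, eval (ℓ j) g = 0) {a : Fin (n + 1) →₀ ℕ} (ha : a ≤ e) :
    coeff a g = 0 := by
  by_cases ham : a.degree = m
  swap
  · exact hg.coeff_eq_zero ham
  obtain ⟨c, rfl⟩ := le_iff_exists_add.1 ha
  have h0 : ∑ j, eval (ℓ j) (monomial c 1 * g) = 0 :=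
    Finset.sum_eq_zero fun j _ ↦ by rw [map_mul, hv j, mul_zero]
  have hexp : ∀ j, eval (ℓ j) (monomial c 1 * g)
      = ∑ v ∈ g.support, coeff v g * eval (ℓ j) (monomial (c + v) 1) := by
    intro j
    conv_lhs => rw [g.as_sum]
    rw [Finset.mul_sum, map_sum]
    refine Finset.sum_congr rfl fun v _ ↦ ?_
    rw [monomial_mul, one_mul, eval_monomial, eval_monomial, one_mul]
  simp only [hexp] at h0
  rw [Finset.sum_comm] at h0
  simp only [← Finset.mul_sum] at h0
  by_contra hne
  rw [Finset.sum_eq_single a] at h0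
  · rcases mul_eq_zero.1 h0 with h | h
    · exact hne h
    · exact (moment _ ℓ hdec _ (by rw [add_comm c a])).1 h (add_comm _ _)
  · intro v hv hva
    have hvm : v.degree = m := by
      by_contra hh
      exact (mem_support_iff.1 hv) (hg.coeff_eq_zero hh)
    rw [(moment _ ℓ hdec (c + v) _).2, mul_zero]
    · intro hh
      rw [add_comm c v] at hh
      exact hva (add_right_cancel hh)
    · rw [map_add, map_add, hvm, ham, add_comm]
  · intro h
    exact absurd (mem_support_iff.2 hne) h

theorem eval_smul_point {n m : ℕ} {g : MvPolynomial (Fin (n + 1)) ℂ} (hg : g.IsHomogeneous m)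
    (c : ℂ) (x : Fin (n + 1) → ℂ) :
    eval (fun i ↦ c * x i) g = c ^ m * eval x g := by
  rw [eval_eq', eval_eq', Finset.mul_sum]
  refine Finset.sum_congr rfl fun v hv ↦ ?_
  have : ∑ i, v i = m := by
    rw [← Finsupp.degree_eq_sum]
    by_contra hh
    exact (mem_support_iff.1 hv) (hg.coeff_eq_zero hh)
  simp only [mul_pow, Finset.prod_mul_distrib, Finset.prod_pow_eq_pow_sum, this]
  ring

theorem isHomogeneous_homogenized {n m : ℕ} {b : Fin (n + 1) →₀ ℕ} (hb : b.degree ≤ m) (c : ℂ) :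
    (monomial (b + Finsupp.single 0 (m - b.degree)) c :
      MvPolynomial (Fin (n + 1)) ℂ).IsHomogeneous m := by
  apply isHomogeneous_monomial
  rw [map_add, Finsupp.degree_single]
  omega

theorem eval_homogenized {n : ℕ} {y : Fin (n + 1) → ℂ} (hy : y 0 = 1) (b : Fin (n + 1) →₀ ℕ)
    (k : ℕ) (c : ℂ) :
    eval y (monomial (b + Finsupp.single 0 k) c) = c * eval y (monomial b 1) := by
  rw [← mul_one c, ← monomial_mul, map_mul, eval_monomial, eval_monomial, eval_monomial]
  simp [hy]

/-- Let `c` be the coefficients of a combination of the monomials in `B` that agrees on the affine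
points `y` with a form of each degree `m ≥ k` having no monomial in `B`. Then the combination
only involves monomials of degree less than `k`: homogenizing it in its top degree would
otherwise give a form vanishing on `y` whose coefficient at a monomial of `B` is nonzero. -/
theorem top_coeff_zero {n : ℕ} {P : Type*} (y : P → Fin (n + 1) → ℂ) (hy : ∀ j, y j 0 = 1)
    (B : Finset (Fin (n + 1) →₀ ℕ)) (hB : ∀ b ∈ B, b 0 = 0)
    (K : ∀ (m : ℕ) (g : MvPolynomial (Fin (n + 1)) ℂ), g.IsHomogeneous m →
      (∀ j, eval (y j) g = 0) → ∀ b ∈ B, coeff b g = 0)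
    (c : (Fin (n + 1) →₀ ℕ) → ℂ) (k : ℕ)
    (f : ℕ → MvPolynomial (Fin (n + 1)) ℂ)
    (hf : ∀ m, k ≤ m → (f m).IsHomogeneous m)
    (hf0 : ∀ m, k ≤ m → ∀ b ∈ B, coeff b (f m) = 0)
    (hfc : ∀ m, k ≤ m → ∀ j, eval (y j) (f m) = ∑ b ∈ B, c b * eval (y j) (monomial b 1)) :
    ∀ b ∈ B, k ≤ b.degree → c b = 0 := by
  classical
  by_contra! hcon
  obtain ⟨b₁, hb₁, hk₁, hc₁⟩ := hcon
  obtain ⟨b₀, hb₀, hmax⟩ := (B.filter fun b ↦ k ≤ b.degree ∧ c b ≠ 0).exists_max_image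
    (fun b ↦ b.degree) ⟨b₁, by simp [hb₁, hk₁, hc₁]⟩
  simp only [Finset.mem_filter] at hb₀ hmax
  obtain ⟨hb₀, hk₀, hc₀⟩ := hb₀
  set m := b₀.degree with hm
  have hlow : ∀ b ∈ B, c b ≠ 0 → b.degree ≤ m := by
    intro b hb hcb
    by_contra hlt
    exact hlt (hmax b ⟨hb, by omega, hcb⟩)
  set g : MvPolynomial (Fin (n + 1)) ℂ :=
    ∑ b ∈ B, monomial (b + Finsupp.single 0 (m - b.degree)) (c b) - f m with hgdef
  have hg : g.IsHomogeneous m := by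
    refine IsHomogeneous.sub (IsHomogeneous.sum _ _ _ fun b hb ↦ ?_) (hf m hk₀)
    by_cases hcb : c b = 0
    · rw [hcb, map_zero]; exact isHomogeneous_zero _ _ _
    · exact isHomogeneous_homogenized (hlow b hb hcb) _
  have hg0 := K m g hg (fun j ↦ by
    rw [hgdef, map_sub, hfc m hk₀ j, map_sum, sub_eq_zero]
    exact Finset.sum_congr rfl fun b _ ↦ eval_homogenized (hy j) _ _ _) b₀ hb₀
  rw [hgdef, coeff_sub, hf0 m hk₀ b₀ hb₀, sub_zero, coeff_sum, Finset.sum_eq_single b₀] at hg0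
  · rw [← hm] at hg0
    simp at hg0
    exact hc₀ hg0
  · intro b hb hbb
    rw [coeff_monomial, if_neg]
    intro hh
    have h0 := DFunLike.congr_fun hh 0
    simp only [Finsupp.add_apply, Finsupp.single_eq_same, hB b hb, hB b₀ hb₀, zero_add] at h0
    rw [h0] at hh
    simp at hh
    exact hbb hh
  · exact fun h ↦ absurd hb₀ h

/-- If forms vanishing on `y` contain no monomial of `B`, and there are at least as many monomials
in `B` as points, then modulo forms vanishing on `y` every form of degree `s` is a combination of
the monomials `X₀^{s-|b|} X^b` with `b ∈ B`. -/
theorem exists_reduced {n : ℕ} {P : Type*} [Fintype P] (y : P → Fin (n + 1) → ℂ)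
    (hy : ∀ j, y j 0 = 1)
    (B : Finset (Fin (n + 1) →₀ ℕ)) (hB : ∀ b ∈ B, b 0 = 0)
    (K : ∀ (m : ℕ) (g : MvPolynomial (Fin (n + 1)) ℂ), g.IsHomogeneous m →
      (∀ j, eval (y j) g = 0) → ∀ b ∈ B, coeff b g = 0)
    (hcard : Fintype.card P ≤ B.card)
    {s : ℕ} {f : MvPolynomial (Fin (n + 1)) ℂ} (hf : f.IsHomogeneous s) :
    ∃ h : MvPolynomial (Fin (n + 1)) ℂ, h.IsHomogeneous s ∧
      (∀ v ∈ h.support, ∃ b ∈ B, ∀ i : Fin n, v i.succ = b i.succ) ∧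
      ∀ j, eval (y j) (f - h) = 0 := by
  classical
  let v : B → P → ℂ := fun b j ↦ eval (y j) (monomial b.1 1)
  have hli : LinearIndependent ℂ v := by
    rw [Fintype.linearIndependent_iff]
    intro a ha b
    let c : (Fin (n + 1) →₀ ℕ) → ℂ := fun b ↦ if hb : b ∈ B then a ⟨b, hb⟩ else 0
    -- The zero form represents a vanishing combination in every degree.
    have hc := top_coeff_zero y hy B hB K c 0 (fun _ ↦ 0) (fun m _ ↦ isHomogeneous_zero _ _ _)
      (fun _ _ _ _ ↦ coeff_zero _) (fun m _ j ↦ by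
        have := congrFun ha j
        rw [Finset.sum_apply] at this
        rw [map_zero, ← Finset.sum_coe_sort]
        refine (Eq.trans ?_ this).symm
        exact Finset.sum_congr rfl fun b _ ↦ by simp [c, v]) b.1 b.2 (Nat.zero_le _)
    simpa [c] using hc
  have hcard' : Fintype.card B = Module.finrank ℂ (P → ℂ) := by
    refine le_antisymm hli.fintype_card_le_finrank ?_
    rw [Module.finrank_fintype_fun_eq_card, Fintype.card_coe]
    exact hcard
  have hspan := hli.span_eq_top_of_card_eq_finrank' hcard'
  have hmem : (fun j ↦ eval (y j) f) ∈ Submodule.span ℂ (Set.range v) := by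
    rw [hspan]; trivial
  obtain ⟨a, ha⟩ := (Submodule.mem_span_range_iff_exists_fun ℂ).1 hmem
  let c : (Fin (n + 1) →₀ ℕ) → ℂ := fun b ↦ if hb : b ∈ B then a ⟨b, hb⟩ else 0
  have hval : ∀ j, eval (y j) f = ∑ b ∈ B, c b * eval (y j) (monomial b 1) := by
    intro j
    have := congrFun ha j
    rw [Finset.sum_apply] at this
    rw [← Finset.sum_coe_sort]
    refine Eq.trans this.symm ?_
    exact Finset.sum_congr rfl fun b _ ↦ by simp [c, v]
  -- In degrees `m > s` the function `f` is represented by `X₀^{m-s} f`, whose monomials all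
  -- involve `X₀`.
  have hc := top_coeff_zero y hy B hB K c (s + 1) (fun m ↦ X 0 ^ (m - s) * f)
    (fun m hm ↦ by
      have := ((isHomogeneous_X ℂ (0 : Fin (n + 1))).pow (m - s)).mul hf
      rwa [one_mul, Nat.sub_add_cancel (by omega)] at this)
    (fun m hm b hb ↦ by
      rw [X_pow_eq_monomial, coeff_monomial_mul', if_neg]
      intro hle
      have := hle 0
      rw [Finsupp.single_eq_same, hB b hb] at this
      omega)
    (fun m _ j ↦ by rw [map_mul, map_pow, eval_X, hy, one_pow, one_mul, hval])
  have hlow : ∀ b ∈ B, c b ≠ 0 → b.degree ≤ s := by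
    intro b hb hcb
    by_contra hlt
    exact hcb (hc b hb (by omega))
  refine ⟨∑ b ∈ B, monomial (b + Finsupp.single 0 (s - b.degree)) (c b), ?_, ?_, ?_⟩
  · refine IsHomogeneous.sum _ _ _ fun b hb ↦ ?_
    by_cases hcb : c b = 0
    · rw [hcb, map_zero]; exact isHomogeneous_zero _ _ _
    · exact isHomogeneous_homogenized (hlow b hb hcb) _
  · intro u hu
    obtain ⟨b, hb, hub⟩ := Finset.mem_biUnion.1 (support_sum hu)
    have := Finset.mem_singleton.1 (support_monomial_subset hub)
    refine ⟨b, hb, fun i ↦ ?_⟩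
    rw [this, Finsupp.add_apply, Finsupp.single_eq_of_ne (Fin.succ_ne_zero i), add_zero]
  · intro j
    rw [map_sub, hval j, map_sum, sub_eq_zero]
    exact Finset.sum_congr rfl fun b _ ↦ (eval_homogenized (hy j) _ _ _).symm

/-- The inequality `dim J_s ≤ q_{s+1}`, valid in every degree `s`. -/
theorem finrank_le_qdim {n r : ℕ} (e : Fin (n + 1) →₀ ℕ) (he : ∀ i, 0 < e i)
    (hr : r = ∏ i ∈ Finset.univ.erase 0, (e i + 1))
    (ℓ : Fin r → Fin (n + 1) → ℂ)
    (hdec : (monomial e 1 : MvPolynomial (Fin (n + 1)) ℂ)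
      = ∑ j, (∑ i, C (ℓ j i) * X i) ^ e.degree)
    (I : Ideal (MvPolynomial (Fin (n + 1)) ℂ))
    (hI : ∀ p : MvPolynomial (Fin (n + 1)) ℂ,
      p ∈ I ↔ ∀ (j : Fin r) (c : ℂ), c ≠ 0 → eval (fun i => c * ℓ j i) p = 0) (s : ℕ) :
    Module.finrank ℂ (idealZ (Ideal.span (Set.range fun i : Fin n =>
        (X i.succ : MvPolynomial (Fin (n + 1)) ℂ) ^ (e i.succ + 1))) (s : ℤ)) ≤
      qdim I ((s : ℤ) + 1) := by
  classical
  let P := {j : Fin r // ℓ j 0 ≠ 0}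
  let y : P → Fin (n + 1) → ℂ := fun j i ↦ (ℓ j.1 0)⁻¹ * ℓ j.1 i
  have hy : ∀ j, y j 0 = 1 := fun j ↦ inv_mul_cancel₀ j.2
  let B : Finset (Fin (n + 1) →₀ ℕ) := Finset.Iic (e.erase 0)
  have hBmem : ∀ b ∈ B, b 0 = 0 ∧ ∀ i, b i ≤ e i := by
    intro b hb
    have hle : b ≤ e.erase 0 := Finset.mem_Iic.1 hb
    refine ⟨by simpa using hle 0, fun i ↦ (hle i).trans ?_⟩
    rw [Finsupp.erase_apply]
    split_ifs <;> omega
  have hcard : Fintype.card P ≤ B.card := by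
    have h1 : B.card = r := by
      have hsupp : e.support = Finset.univ := by
        ext i
        simpa using (he i).ne'
      rw [Finsupp.card_Iic, Finsupp.support_erase, hsupp, hr]
      refine Finset.prod_congr rfl fun i hi ↦ ?_
      rw [Finsupp.erase_ne (Finset.ne_of_mem_erase hi), Nat.card_Iic]
    rw [h1]
    exact (Fintype.card_subtype_le _).trans (Fintype.card_fin r).le
  -- Multiplying by `X₀` takes care of the points `ℓⱼ` on the hyperplane `X₀ = 0`.
  have hvan : ∀ (m : ℕ) (g : MvPolynomial (Fin (n + 1)) ℂ), g.IsHomogeneous m →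
      (∀ j, eval (y j) g = 0) → ∀ j (c : ℂ), eval (fun i ↦ c * ℓ j i) (X 0 * g) = 0 := by
    intro m g hg h j c
    rw [map_mul, eval_X]
    by_cases hj : ℓ j 0 = 0
    · rw [hj, mul_zero, zero_mul]
    · have : (fun i ↦ c * ℓ j i) = fun i ↦ (c * ℓ j 0) * y ⟨j, hj⟩ i := by
        funext i
        simp only [y]
        field_simp
      rw [this, eval_smul_point hg, h, mul_zero, mul_zero]
  have K : ∀ (m : ℕ) (g : MvPolynomial (Fin (n + 1)) ℂ), g.IsHomogeneous m →
      (∀ j, eval (y j) g = 0) → ∀ b ∈ B, coeff b g = 0 := by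
    intro m g hg h b hb
    have hle : Finsupp.single 0 1 + b ≤ e := by
      intro i
      rw [Finsupp.add_apply]
      by_cases hi : i = 0
      · subst hi
        rw [Finsupp.single_eq_same, (hBmem b hb).1]
        exact he 0
      · rw [Finsupp.single_eq_of_ne hi, zero_add]
        exact (hBmem b hb).2 i
    have := apolar e ℓ hdec ((isHomogeneous_X ℂ (0 : Fin (n + 1))).mul hg)
      (fun j ↦ by simpa using hvan m g hg h j 1) hle
    rwa [coeff_X_mul] at this
  let H := homogeneousSubmodule (Fin (n + 1)) ℂ s
  have hHfin : Module.Finite ℂ H := Module.Finite.iff_fg.2 (homogeneousSubmodule_fg (σ := Fin (n + 1)) (R := ℂ) s)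
  let φ : MvPolynomial (Fin (n + 1)) ℂ →ₗ[ℂ] (P → ℂ) :=
    LinearMap.pi fun j ↦ (aeval (y j)).toLinearMap
  have hφ : ∀ g, φ g = 0 ↔ ∀ j, eval (y j) g = 0 := by
    intro g
    rw [_root_.funext_iff]
    simp [φ]
  let W := H ⊓ LinearMap.ker φ
  let N := H ⊓ restrictSupport ℂ {v : Fin (n + 1) →₀ ℕ | ∀ i : Fin n, v i.succ ≤ e i.succ}
  have hWfin : Module.Finite ℂ W := Submodule.finiteDimensional_of_le (inf_le_left : W ≤ H)
  have hNfin : Module.Finite ℂ N := Submodule.finiteDimensional_of_le (inf_le_left : N ≤ H)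
  have hhom : homZ n (s : ℤ) = H := by simp [homZ, H]
  set J := Ideal.span (Set.range fun i : Fin n =>
        (X i.succ : MvPolynomial (Fin (n + 1)) ℂ) ^ (e i.succ + 1)) with hJ
  have hJH : idealZ J (s : ℤ) ≤ H := by
    rw [idealZ, hhom]
    exact inf_le_right
  have hJfin : Module.Finite ℂ (idealZ J (s : ℤ)) := Submodule.finiteDimensional_of_le hJH
  have hsup : H ≤ W ⊔ N := by
    intro f hf
    obtain ⟨h, hh, hsupp, hval⟩ :=
      exists_reduced y hy B (fun b hb ↦ (hBmem b hb).1) K hcard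
        ((mem_homogeneousSubmodule _ _).1 hf)
    rw [← sub_add_cancel f h]
    refine Submodule.add_mem_sup ⟨H.sub_mem hf hh, (hφ _).2 hval⟩ ⟨hh, ?_⟩
    rw [SetLike.mem_coe, mem_restrictSupport_iff]
    intro v hv i
    obtain ⟨b, hb, hbv⟩ := hsupp v hv
    rw [hbv i]
    exact (hBmem b hb).2 _
  have hdisj : idealZ J (s : ℤ) ⊓ N = ⊥ := by
    rw [eq_bot_iff]
    rintro f ⟨⟨hfJ, -⟩, -, hfN⟩
    have hfJ' : f ∈ J := hfJ
    have hJ' : J = Ideal.span ((fun v ↦ monomial v (1 : ℂ)) ''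
        Set.range fun i : Fin n ↦ Finsupp.single i.succ (e i.succ + 1)) := by
      rw [hJ, ← Set.range_comp]
      congr 2
      funext i
      exact X_pow_eq_monomial
    rw [hJ', mem_ideal_span_monomial_image] at hfJ'
    rw [SetLike.mem_coe, mem_restrictSupport_iff] at hfN
    rw [Submodule.mem_bot, ← support_eq_empty, Finset.eq_empty_iff_forall_notMem]
    intro v hv
    obtain ⟨-, ⟨i, rfl⟩, hle⟩ := hfJ' v hv
    have h1 := hle i.succ
    have h2 : v i.succ ≤ e i.succ := hfN hv i
    rw [Finsupp.single_eq_same] at h1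
    omega
  have hJW : Module.finrank ℂ (idealZ J (s : ℤ)) ≤ Module.finrank ℂ W := by
    have h1 := Submodule.finrank_sup_add_finrank_inf_eq (idealZ J (s : ℤ)) N
    rw [hdisj, finrank_bot, add_zero] at h1
    have h2 : Module.finrank ℂ ↥(idealZ J (s : ℤ) ⊔ N) ≤ Module.finrank ℂ ↥(W ⊔ N) :=
      Submodule.finrank_mono (sup_le (hJH.trans hsup) le_sup_right)
    have h3 := Submodule.finrank_add_le_finrank_add_finrank W N
    omega
  refine hJW.trans ?_
  have hinj : Function.Injective (LinearMap.mulLeft ℂ (X 0 : MvPolynomial (Fin (n + 1)) ℂ)) :=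
    fun a b hab ↦ mul_left_cancel₀ (X_ne_zero 0) hab
  rw [(Submodule.equivMapOfInjective _ hinj W).finrank_eq, qdim, add_sub_cancel_right, hhom]
  have hfin : Module.Finite ℂ ↥(idealZ I ((s : ℤ) + 1) ⊓
      H.map (LinearMap.mulLeft ℂ (X 0 : MvPolynomial (Fin (n + 1)) ℂ))) :=
    Submodule.finiteDimensional_of_le inf_le_right
  refine Submodule.finrank_mono ?_
  rintro _ ⟨g, ⟨hgH, hgW⟩, rfl⟩
  have hg : g.IsHomogeneous s := hgH
  refine ⟨⟨?_, ?_⟩, ⟨g, hgH, rfl⟩⟩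
  · exact (hI _).2 fun j c _ ↦ hvan s g hg ((hφ g).1 hgW) j c
  · have : homZ n ((s : ℤ) + 1) = homogeneousSubmodule (Fin (n + 1)) ℂ (1 + s) := by
      rw [homZ, if_pos (by omega)]
      congr 1
      omega
    rw [SetLike.mem_coe, this]
    exact (isHomogeneous_X ℂ (0 : Fin (n + 1))).mul hg

/-- If `q_t < dim J_{t−1}` for some integer `t`, then `q_{t+k·d_0} < dim J_{t+k·d_0−1}`
for every integer `k > 0`. Here `I` is the vanishing ideal of a Waring decomposition of
the monomial `x_0^{d_0} ⋯ x_n^{d_n}`, and `J = (α_1^{d_1+1},…,α_n^{d_n+1})`. -/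
theorem qdim_lt_propagates (n : ℕ) (hn : 1 ≤ n)
    (d : Fin (n + 1) → ℕ) (hmono : Monotone d) (hpos : 0 < d 0)
    (r : ℕ) (hr : r = ∏ i ∈ Finset.univ.erase 0, (d i + 1))
    (ℓ : Fin r → (Fin (n + 1) → ℂ))
    (hdec : (∏ i, X i ^ d i : MvPolynomial (Fin (n + 1)) ℂ)
        = ∑ j, (∑ i, C (ℓ j i) * X i) ^ (∑ i, d i))
    (hmin : IsLeast {s : ℕ | ∃ m : Fin s → (Fin (n + 1) → ℂ),
        (∏ i, X i ^ d i : MvPolynomial (Fin (n + 1)) ℂ)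
          = ∑ j, (∑ i, C (m j i) * X i) ^ (∑ i, d i)} r)
    (I : Ideal (MvPolynomial (Fin (n + 1)) ℂ))
    (hI : ∀ p : MvPolynomial (Fin (n + 1)) ℂ,
      p ∈ I ↔ ∀ (j : Fin r) (c : ℂ), c ≠ 0 → eval (fun i => c * ℓ j i) p = 0)
    (t : ℤ)
    (ht : qdim I t < Module.finrank ℂ
      (idealZ (Ideal.span (Set.range fun i : Fin n =>
        (X i.succ : MvPolynomial (Fin (n + 1)) ℂ) ^ (d i.succ + 1))) (t - 1))) :
    ∀ k : ℤ, 0 < k → qdim I (t + k * (d 0 : ℤ)) < Module.finrank ℂ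
      (idealZ (Ideal.span (Set.range fun i : Fin n =>
        (X i.succ : MvPolynomial (Fin (n + 1)) ℂ) ^ (d i.succ + 1)))
        (t + k * (d 0 : ℤ) - 1)) := by
  exfalso
  let e : Fin (n + 1) →₀ ℕ := Finsupp.equivFunOnFinite.symm d
  have hdeg : e.degree = ∑ i, d i := by
    rw [Finsupp.degree_eq_sum]
    rfl
  have hmon : (monomial e 1 : MvPolynomial (Fin (n + 1)) ℂ) = ∏ i, X i ^ d i := by
    rw [monomial_eq, C_1, one_mul, Finsupp.prod_fintype _ _ fun i ↦ pow_zero _]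
    rfl
  rcases lt_or_ge (t - 1) 0 with hneg | hnonneg
  · rw [idealZ, homZ, if_neg (by omega), inf_bot_eq, finrank_bot] at ht
    exact Nat.not_lt_zero _ ht
  · obtain ⟨s, hs⟩ := Int.eq_ofNat_of_zero_le hnonneg
    have hle := finrank_le_qdim e (fun i ↦ hpos.trans_le (hmono (Fin.zero_le i))) hr ℓ
      (by rw [hmon, hdeg]; exact hdec) I hI s
    rw [show t = (s : ℤ) + 1 by omega, add_sub_cancel_right] at ht
    exact absurd hle (not_le.2 ht)
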